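/- Let φ: S_{m−1} → S_m be defined by φ(π_1π_2⋯π_{m−1}) = (π_1+1)(π_2+1)⋯(π_{m−1}+1)·1. Then for every n ≥ 4: if σ is a permutation of {1,…,n−1} avoiding 123 and containing 312 exactly once, then φ(σ) is a permutation of {1,…,n} avoiding 123 and containing 312 exactly once; and if τ is a permutation of {1,…,n−1} avoiding 312 and containing 123 exactly once, then φ(τ) is a permutation of {1,…,n} avoiding 312 and containing 123 exactly once. -/

import Mathlib

/-- Number of occurrences of the pattern `α ∈ S_k` in the permutation `π ∈ S_n`:
the number of strictly increasing choices of `k` indices such that the corresponding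
subword of `π` is order-isomorphic to `α`. -/
noncomputable def occCount {k n : ℕ} (α : Equiv.Perm (Fin k)) (π : Equiv.Perm (Fin n)) : ℕ :=
  Nat.card {f : Fin k → Fin n // StrictMono f ∧ ∀ a b : Fin k, α a < α b ↔ π (f a) < π (f b)}

/-- `π` avoids the pattern `α`. -/
def avoids {k n : ℕ} (α : Equiv.Perm (Fin k)) (π : Equiv.Perm (Fin n)) : Prop :=
  occCount α π = 0

/-- `π` contains the pattern `α` exactly once. -/
def containsOnce {k n : ℕ} (α : Equiv.Perm (Fin k)) (π : Equiv.Perm (Fin n)) : Prop :=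
  occCount α π = 1

/-- The pattern `123` (as a permutation of `Fin 3`, 0-indexed). -/
def p123 : Equiv.Perm (Fin 3) := ⟨![0,1,2], ![0,1,2], by decide, by decide⟩
/-- The pattern `132`. -/
def p132 : Equiv.Perm (Fin 3) := ⟨![0,2,1], ![0,2,1], by decide, by decide⟩
/-- The pattern `213`. -/
def p213 : Equiv.Perm (Fin 3) := ⟨![1,0,2], ![1,0,2], by decide, by decide⟩
/-- The pattern `231`. -/
def p231 : Equiv.Perm (Fin 3) := ⟨![1,2,0], ![2,0,1], by decide, by decide⟩
/-- The pattern `312`. -/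
def p312 : Equiv.Perm (Fin 3) := ⟨![2,0,1], ![1,2,0], by decide, by decide⟩
/-- The pattern `321`. -/
def p321 : Equiv.Perm (Fin 3) := ⟨![2,1,0], ![2,1,0], by decide, by decide⟩

/-- `s_n(α;β)`: the number of permutations of `{1,…,n}` that avoid `α` and contain `β`
exactly once. -/
noncomputable def sAvoidContain (α β : Equiv.Perm (Fin 3)) (n : ℕ) : ℕ :=
  Nat.card {π : Equiv.Perm (Fin n) // avoids α π ∧ containsOnce β π}

/-- `s_n(∅;{α,β})`: the number of permutations of `{1,…,n}` that contain each of `α` and `β`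
exactly once. -/
noncomputable def sContainBoth (α β : Equiv.Perm (Fin 3)) (n : ℕ) : ℕ :=
  Nat.card {π : Equiv.Perm (Fin n) // containsOnce α π ∧ containsOnce β π}

/-- `φ : S_m → S_{m+1}` appends a new smallest element at the end:
`φ(π₁…π_m) = (π₁+1)(π₂+1)⋯(π_m+1)·1`. -/
def phi {m : ℕ} (π : Equiv.Perm (Fin m)) : Equiv.Perm (Fin (m + 1)) where
  toFun i := Fin.lastCases 0 (fun j => (π j).succ) i
  invFun v := Fin.cases (Fin.last m) (fun j => (π.symm j).castSucc) v
  left_inv i := by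
    induction i using Fin.lastCases with
    | last => simp
    | cast j => simp
  right_inv v := by
    induction v using Fin.cases with
    | zero => simp
    | succ j => simp

/-!
The value `0` of `phi π` sits in the last position. An increasing choice of indices can only use
that position for its last letter, so it never does so when the last letter of the pattern is not
its smallest. Hence the occurrences of such a pattern in `phi π` are exactly the occurrences in
`π`, with the same positions; both `123` and `312` end in an ascent.
-/

/-- The positions `f` carry an occurrence of the pattern `α` in `π`; these are the functions
counted by `occCount`. -/
def IsOccurrence {k n : ℕ} (α : Equiv.Perm (Fin k)) (π : Equiv.Perm (Fin n))
    (f : Fin k → Fin n) : Prop :=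
  StrictMono f ∧ ∀ a b : Fin k, α a < α b ↔ π (f a) < π (f b)

theorem occCount_eq_ncard {k n : ℕ} (α : Equiv.Perm (Fin k)) (π : Equiv.Perm (Fin n)) :
    occCount α π = {f | IsOccurrence α π f}.ncard :=
  rfl

section

variable {k m : ℕ}

theorem phi_castSucc (π : Equiv.Perm (Fin m)) (i : Fin m) : phi π i.castSucc = (π i).succ := by
  simp [phi]

theorem phi_last (π : Equiv.Perm (Fin m)) : phi π (Fin.last m) = 0 := by
  simp [phi]

theorem isOccurrence_phi_castSucc_comp_iff {α : Equiv.Perm (Fin k)} {π : Equiv.Perm (Fin m)}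
    {f : Fin k → Fin m} :
    IsOccurrence α (phi π) (Fin.castSucc ∘ f) ↔ IsOccurrence α π f := by
  simp only [IsOccurrence, StrictMono, Function.comp_apply, phi_castSucc,
    Fin.castSucc_lt_castSucc_iff, Fin.succ_lt_succ_iff]

theorem IsOccurrence.apply_ne_last_of_phi {α : Equiv.Perm (Fin (k + 1))}
    (hα : α (Fin.last k) ≠ 0) {π : Equiv.Perm (Fin m)} {g : Fin (k + 1) → Fin (m + 1)}
    (hg : IsOccurrence α (phi π) g) (a : Fin (k + 1)) : g a ≠ Fin.last m := by
  intro ha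
  have g_last : g (Fin.last k) = Fin.last m :=
    Fin.last_le_iff.mp (ha ▸ hg.1.monotone (Fin.le_last a))
  have zero_lt : α (α.symm 0) < α (Fin.last k) := by
    simpa only [Equiv.apply_symm_apply] using Fin.pos_iff_ne_zero.mpr hα
  have lt_zero : phi π (g (α.symm 0)) < 0 := by
    simpa only [g_last, phi_last] using (hg.2 _ _).mp zero_lt
  exact Fin.not_lt_zero _ lt_zero

theorem setOf_isOccurrence_phi {α : Equiv.Perm (Fin (k + 1))} (hα : α (Fin.last k) ≠ 0)
    (π : Equiv.Perm (Fin m)) :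
    {g | IsOccurrence α (phi π) g} = (Fin.castSucc ∘ ·) '' {f | IsOccurrence α π f} := by
  ext g
  constructor
  · intro hg
    choose f hf using fun a => Fin.exists_castSucc_eq.mpr (hg.apply_ne_last_of_phi hα a)
    obtain rfl : Fin.castSucc ∘ f = g := funext hf
    exact ⟨f, isOccurrence_phi_castSucc_comp_iff.mp hg, rfl⟩
  · rintro ⟨f, hf, rfl⟩
    exact isOccurrence_phi_castSucc_comp_iff.mpr hf

theorem occCount_phi {α : Equiv.Perm (Fin (k + 1))} (hα : α (Fin.last k) ≠ 0)
    (π : Equiv.Perm (Fin m)) : occCount α (phi π) = occCount α π := by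
  rw [occCount_eq_ncard, setOf_isOccurrence_phi hα,
    Set.ncard_image_of_injective _ (Fin.castSucc_injective m).comp_left, occCount_eq_ncard]

end

theorem phi_mem_of_mem_general {j k m : ℕ} {α : Equiv.Perm (Fin (j + 1))}
    {β : Equiv.Perm (Fin (k + 1))} (hα : α (Fin.last j) ≠ 0) (hβ : β (Fin.last k) ≠ 0)
    (π : Equiv.Perm (Fin m)) :
    avoids α (phi π) ∧ containsOnce β (phi π) ↔ avoids α π ∧ containsOnce β π := by
  rw [avoids, containsOnce, occCount_phi hα, occCount_phi hβ, avoids, containsOnce]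

/-- For `n = m+1 ≥ 4`: `φ` maps `S_{n−1}(123;312)` into `S_n(123;312)` and
`S_{n−1}(312;123)` into `S_n(312;123)`. -/
theorem phi_mem_of_mem :
    ∀ m : ℕ, 4 ≤ m + 1 →
      (∀ σ : Equiv.Perm (Fin m), avoids p123 σ → containsOnce p312 σ →
        avoids p123 (phi σ) ∧ containsOnce p312 (phi σ)) ∧
      (∀ τ : Equiv.Perm (Fin m), avoids p312 τ → containsOnce p123 τ →
        avoids p312 (phi τ) ∧ containsOnce p123 (phi τ)) := by
  intro m _
  have h123 : p123 (Fin.last 2) ≠ 0 := by decide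
  have h312 : p312 (Fin.last 2) ≠ 0 := by decide
  exact ⟨fun σ avoids_σ once_σ => (phi_mem_of_mem_general h123 h312 σ).mpr ⟨avoids_σ, once_σ⟩,
    fun τ avoids_τ once_τ => (phi_mem_of_mem_general h312 h123 τ).mpr ⟨avoids_τ, once_τ⟩⟩
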